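/- (Theorem 4, symmetric Euler-coefficient formula.) If Q satisfies the odd-m relations, i.e. for every S ⊆ Fin N with |S| odd one has Q(S) = −(1/2) · Σ_{T ⊆ Sᶜ, T ≠ ∅} Q(S ∪ T), then for every S ⊆ Fin N with |S| odd and Sᶜ ≠ ∅ one has the linear combination Q(S) = Σ_{T ⊆ Sᶜ, |T| odd} e₀(|T|) · Q(S ∪ T), where the sum runs over all nonempty subsets T of Sᶜ of odd cardinality. -/

import Mathlib

/-- The constant term `E_k(0)` of the `k`-th Euler polynomial, for odd `k`,
expressed via Bernoulli numbers: `e₀(k) = 2 (1 − 2^(k+1)) B_{k+1} / (k+1)`. -/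
noncomputable def eulerConst (k : ℕ) : ℚ :=
  2 * (1 - 2 ^ (k + 1)) * bernoulli (k + 1) / (k + 1)

/-!
Let `e n = eulerConst n`. Its exponential generating function is `E = 2 / (exp + 1)`, whose
derivative satisfies `E' * (exp + 1) = -E * exp = E - 2`. On coefficients, for every finite set `V`,
`e (#V + 1) + ∑ U ⊆ V, e (#U + 1) = e #V - 2 * [V = ∅]`.

Write `f U = Q (S ∪ U)` for `U ⊆ A = Sᶜ`. The relation at an even `U` says that
`f U + ∑ V ∈ Icc U A, f V = 0`. Weight it by `e (#U + 1)`, which vanishes for odd `U`, sum over all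
`U ⊆ A` and exchange the two sums: the coefficient of `f V` becomes `e #V - 2 * [V = ∅]`. As
`e 0 = 1` and `e` vanishes at the other even numbers, this expresses `f ∅` by the `f V` with `#V`
odd.
-/

open Finset
open scoped Nat

lemma eulerConst_zero : eulerConst 0 = 1 := by
  norm_num [eulerConst, bernoulli_one]

lemma eulerConst_eq_zero_of_even {k : ℕ} (hk : Even k) (hk₀ : k ≠ 0) : eulerConst k = 0 := by
  rw [eulerConst, bernoulli_eq_zero_of_odd hk.add_one (by omega), mul_zero, zero_div]

section GeneratingFunction

open PowerSeries

variable (A : Type*) [CommRing A] [Algebra ℚ A]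

/-- The exponential generating function of the constants `eulerConst n`, with coefficients in an
arbitrary `ℚ`-algebra as for `bernoulliPowerSeries`. -/
noncomputable def eulerPowerSeries : PowerSeries A :=
  .mk fun n => algebraMap ℚ A (eulerConst n / n !)

lemma exp_sub_one_mul_cancel {f g : PowerSeries A}
    (h : (exp A - 1) * f = (exp A - 1) * g) : f = g := by
  refine X_mul_cancel ?_
  rw [← bernoulliPowerSeries_mul_exp_sub_one, mul_assoc, h, mul_assoc]

lemma rescale_two_bernoulliPowerSeries_mul_exp_add_one :
    rescale 2 (bernoulliPowerSeries A) * (exp A + 1) = 2 * bernoulliPowerSeries A := by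
  have h := bernoulliPowerSeries_mul_exp_sub_one A
  have h_rescale : rescale 2 (bernoulliPowerSeries A) * (exp A ^ 2 - 1) = 2 * X := by
    have := congrArg (rescale (2 : A)) h
    rwa [map_mul, map_sub, map_one, rescale_X, map_ofNat, ← Nat.cast_ofNat (R := A),
      ← exp_pow_eq_rescale_exp, Nat.cast_ofNat] at this
  refine exp_sub_one_mul_cancel A ?_
  linear_combination h_rescale - 2 * h

lemma X_mul_eulerPowerSeries :
    X * eulerPowerSeries A =
      2 * (bernoulliPowerSeries A - rescale 2 (bernoulliPowerSeries A)) := by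
  ext n
  rw [← map_ofNat (C (R := A)) 2, coeff_C_mul, map_sub, coeff_rescale]
  cases n with
  | zero => simp
  | succ n =>
    have h_coeff : eulerConst n / n ! =
        2 * (bernoulli (n + 1) / (n + 1)! - 2 ^ (n + 1) * (bernoulli (n + 1) / (n + 1)!)) := by
      rw [eulerConst, Nat.factorial_succ]
      push_cast
      field_simp
    rw [coeff_succ_X_mul, eulerPowerSeries, bernoulliPowerSeries, coeff_mk, coeff_mk, h_coeff]
    simp only [map_mul, map_sub, map_pow, map_ofNat]

lemma eulerPowerSeries_mul_exp_add_one : eulerPowerSeries A * (exp A + 1) = 2 := by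
  refine X_mul_cancel ?_
  linear_combination (exp A + 1) * X_mul_eulerPowerSeries A
    - 2 * rescale_two_bernoulliPowerSeries_mul_exp_add_one A
    + 2 * bernoulliPowerSeries_mul_exp_sub_one A

lemma derivative_eulerPowerSeries_mul_exp_add_one :
    d⁄dX A (eulerPowerSeries A) * (exp A + 1) = eulerPowerSeries A - 2 := by
  have h := eulerPowerSeries_mul_exp_add_one A
  have h_deriv : eulerPowerSeries A * exp A +
      (exp A + 1) * d⁄dX A (eulerPowerSeries A) = 0 := by
    have h_const : d⁄dX A (2 : PowerSeries A) = 0 := by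
      rw [← map_ofNat (C (R := A)) 2, derivative_C]
    simpa only [Derivation.leibniz, map_add, derivative_exp, derivative_one, add_zero,
      smul_eq_mul, h_const] using congrArg (d⁄dX A) h
  linear_combination h_deriv - h

lemma derivative_eulerPowerSeries :
    d⁄dX A (eulerPowerSeries A) = .mk fun n => algebraMap ℚ A (eulerConst (n + 1) / n !) := by
  ext n
  have h_factorial : eulerConst (n + 1) / (n + 1)! * (n + 1) = eulerConst (n + 1) / n ! := by
    rw [Nat.factorial_succ]
    push_cast
    field_simp
  rw [coeff_derivative, eulerPowerSeries, coeff_mk, coeff_mk, ← h_factorial]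
  simp only [map_mul, map_add, map_natCast, map_one]

lemma coeff_mk_div_factorial_mul_exp (a : ℕ → ℚ) (n : ℕ) :
    coeff n (.mk (fun k => algebraMap ℚ A (a k / k !)) * exp A) =
      algebraMap ℚ A ((∑ k ∈ range (n + 1), n.choose k * a k) / n !) := by
  rw [coeff_mul, Nat.sum_antidiagonal_eq_sum_range_succ_mk, sum_div, map_sum]
  refine sum_congr rfl fun k hk => ?_
  have hk : k ≤ n := mem_range_succ_iff.1 hk
  rw [coeff_mk, coeff_exp, ← map_mul, Nat.cast_choose ℚ hk]
  field_simp

end GeneratingFunction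

lemma sum_choose_mul_eulerConst_succ (n : ℕ) :
    ∑ k ∈ range (n + 1), n.choose k * eulerConst (k + 1) + eulerConst (n + 1) =
      eulerConst n - if n = 0 then 2 else 0 := by
  have h := congrArg (PowerSeries.coeff n) (derivative_eulerPowerSeries_mul_exp_add_one ℚ)
  rw [derivative_eulerPowerSeries, mul_add, mul_one, map_add, coeff_mk_div_factorial_mul_exp,
    map_sub, eulerPowerSeries, PowerSeries.coeff_mk, PowerSeries.coeff_mk,
    ← map_ofNat (PowerSeries.C (R := ℚ)) 2, PowerSeries.coeff_C] at h
  simp only [Algebra.algebraMap_self, RingHom.id_apply] at h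
  have h_factorial : (n ! : ℚ) * (if n = 0 then 2 else 0) = if n = 0 then 2 else 0 := by
    split_ifs with hn <;> simp [hn]
  rw [← h_factorial]
  field_simp at h
  linear_combination h

section Subsets

variable {α : Type*}

lemma sum_powerset_eulerConst_card_smul {M : Type*} [AddCommGroup M] [Module ℚ M]
    (A : Finset α) (f : Finset α → M) :
    ∑ V ∈ A.powerset, eulerConst #V • f V =
      f ∅ + ∑ V ∈ A.powerset with Odd #V, eulerConst #V • f V := by
  have h_even : ∑ V ∈ A.powerset with ¬ Odd #V, eulerConst #V • f V = f ∅ := by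
    rw [sum_eq_single_of_mem ∅ (by simp), card_empty, eulerConst_zero, one_smul]
    intro V hV hV₀
    rw [eulerConst_eq_zero_of_even (Nat.not_odd_iff_even.1 (mem_filter.1 hV).2)
      (card_ne_zero.2 (nonempty_iff_ne_empty.2 hV₀)), zero_smul]
  rw [← sum_filter_add_sum_filter_not A.powerset (fun V => Odd #V), h_even, add_comm]

variable [DecidableEq α]

lemma sum_powerset_eulerConst_card_succ (V : Finset α) :
    ∑ U ∈ V.powerset, eulerConst (#U + 1) + eulerConst (#V + 1) =
      eulerConst #V - if V = ∅ then 2 else 0 := by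
  rw [sum_powerset_apply_card fun k => eulerConst (k + 1)]
  simpa only [nsmul_eq_mul, card_eq_zero] using sum_choose_mul_eulerConst_succ #V

lemma sum_Icc_eq_sum_powerset_sdiff {M : Type*} [AddCommMonoid M] {U A : Finset α} (hU : U ⊆ A)
    (f : Finset α → M) :
    ∑ V ∈ Icc U A, f V = ∑ T ∈ (A \ U).powerset, f (U ∪ T) := by
  have h_disjoint {T : Finset α} (hT : T ∈ (A \ U).powerset) : Disjoint U T :=
    disjoint_sdiff.mono_right (mem_powerset.1 hT)
  rw [Icc_eq_image_powerset hU, sum_image]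
  intro T hT T' hT' h
  rw [← union_sdiff_cancel_left (h_disjoint hT), ← union_sdiff_cancel_left (h_disjoint hT')]
  exact congrArg (· \ U) h

lemma sum_powerset_smul_sum_Icc {R M : Type*} [Semiring R] [AddCommMonoid M] [Module R M]
    (A : Finset α) (c : Finset α → R) (f : Finset α → M) :
    ∑ U ∈ A.powerset, c U • ∑ V ∈ Icc U A, f V =
      ∑ V ∈ A.powerset, (∑ U ∈ V.powerset, c U) • f V := by
  simp only [smul_sum, sum_smul]
  refine sum_comm' fun U V => ?_
  simp only [mem_powerset, mem_Icc]
  exact ⟨fun h => h.2, fun h => ⟨h.1.trans h.2, h⟩⟩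

variable {M : Type*} [AddCommGroup M] [Module ℚ M]

theorem apply_empty_eq_sum_eulerConst_smul (A : Finset α) (f : Finset α → M)
    (hf : ∀ U ⊆ A, Even #U → f U + ∑ V ∈ Icc U A, f V = 0) :
    f ∅ = ∑ T ∈ A.powerset with Odd #T, eulerConst #T • f T := by
  have h_weighted (U : Finset α) (hU : U ∈ A.powerset) :
      eulerConst (#U + 1) • (f U + ∑ V ∈ Icc U A, f V) = 0 := by
    rcases Nat.even_or_odd #U with h_even | h_odd
    · rw [hf U (mem_powerset.1 hU) h_even, smul_zero]
    · rw [eulerConst_eq_zero_of_even h_odd.add_one (Nat.succ_ne_zero _), zero_smul]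
  have h_exchanged : ∑ V ∈ A.powerset, (eulerConst #V - if V = ∅ then 2 else 0) • f V = 0 := by
    calc
      _ = ∑ V ∈ A.powerset,
            (∑ U ∈ V.powerset, eulerConst (#U + 1) + eulerConst (#V + 1)) • f V := by
        simp only [sum_powerset_eulerConst_card_succ]
      _ = ∑ U ∈ A.powerset, eulerConst (#U + 1) • (f U + ∑ V ∈ Icc U A, f V) := by
        simp only [add_smul, smul_add, sum_add_distrib, sum_powerset_smul_sum_Icc]
        exact add_comm _ _
      _ = 0 := sum_eq_zero h_weighted
  have h_split : f ∅ + ∑ T ∈ A.powerset with Odd #T, eulerConst #T • f T - (2 : ℚ) • f ∅ = 0 := by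
    simpa only [sub_smul, sum_sub_distrib, sum_powerset_eulerConst_card_smul, ite_smul, zero_smul,
      sum_ite_eq', empty_mem_powerset, if_true] using h_exchanged
  rw [two_smul, add_sub_add_left_eq_sub, sub_eq_zero] at h_split
  exact h_split.symm

variable [Fintype α]

lemma add_sum_Icc_eq_zero_of_eq_neg_half_smul {Q : Finset α → M} {S U : Finset α} (hU : U ⊆ Sᶜ)
    (h : Q (S ∪ U) =
      -(1 / 2 : ℚ) • ∑ T ∈ (S ∪ U)ᶜ.powerset.filter (· ≠ ∅), Q (S ∪ U ∪ T)) :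
    Q (S ∪ U) + ∑ V ∈ Icc U Sᶜ, Q (S ∪ V) = 0 := by
  have h_sum : ∑ V ∈ Icc U Sᶜ, Q (S ∪ V) =
      Q (S ∪ U) + ∑ T ∈ (S ∪ U)ᶜ.powerset.filter (· ≠ ∅), Q (S ∪ U ∪ T) := by
    rw [sum_Icc_eq_sum_powerset_sdiff hU, filter_ne', sdiff_eq_inter_compl, ← compl_union,
      ← add_sum_erase _ _ (empty_mem_powerset _), union_empty]
    simp only [union_assoc]
  rw [h_sum, h]
  module

theorem odd_from_even_euler_coefficients_general (Q : Finset α → M)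
    (h : ∀ S : Finset α, Odd #S →
      Q S = -(1 / 2 : ℚ) • ∑ T ∈ Sᶜ.powerset.filter (· ≠ ∅), Q (S ∪ T))
    (S : Finset α) (hS : Odd #S) :
    Q S = ∑ T ∈ Sᶜ.powerset with Odd #T, eulerConst #T • Q (S ∪ T) := by
  have h_even : ∀ U ⊆ Sᶜ, Even #U → Q (S ∪ U) + ∑ V ∈ Icc U Sᶜ, Q (S ∪ V) = 0 := by
    intro U hU h_card
    refine add_sum_Icc_eq_zero_of_eq_neg_half_smul hU (h _ ?_)
    rw [card_union_of_disjoint (disjoint_compl_right.mono_right hU)]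
    exact hS.add_even h_card
  simpa only [union_empty] using apply_empty_eq_sum_eulerConst_smul Sᶜ (fun U => Q (S ∪ U)) h_even

end Subsets

/-- (Theorem 4, symmetric Euler-coefficient formula.) If `Q` satisfies the
odd-`m` relations, then every odd-`|S|` quantity is the linear combination of
the even ones with Euler-polynomial constant terms as coefficients. -/
theorem odd_from_even_euler_coefficients (N : ℕ) (hN : 1 ≤ N)
    (Q : Finset (Fin N) → ℝ)
    (h : ∀ S : Finset (Fin N), Odd S.card →
      Q S = -(1 / 2) * ∑ T ∈ Sᶜ.powerset.filter (· ≠ ∅), Q (S ∪ T)) :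
    ∀ S : Finset (Fin N), Odd S.card → Sᶜ ≠ ∅ →
      Q S = ∑ T ∈ Sᶜ.powerset.filter (fun T => Odd T.card),
        (eulerConst T.card : ℝ) * Q (S ∪ T) := by
  intro S hS _
  simpa only [Rat.smul_def] using
    odd_from_even_euler_coefficients_general Q (by simpa [Rat.smul_def] using h) S hS
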